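/- Let B be a C*-algebra, p ∈ M(B) a projection, and x ∈ U(1 + B) a unitary such that ‖(p − 1)(x − 1)‖ < 1/4 and ‖(1−p)x(1−p) − (1−p)‖ < 1/4. Define x' = p x p + (1 − p). Then ‖x − x'‖ < 1, x' is invertible, and z = x'|x'|^{-1} is a unitary in 1 + pBp + (1−p)·0 direction, i.e., z ∈ U(1 + pBp) ⊕ (1−p), with ‖z − x‖ ≤ 2‖x − x'‖/(1 − ‖x − x'‖). -/

import Mathlib

/-!
Write `q = 1 - p`, `y = p x p + q`, `a = |y|`, `z = y a⁻¹` and `d = ‖x - y‖`.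

* `x - y = q (x - 1) p + p (x - 1) q + (q x q - q)`. As `x - 1` is normal,
  `‖(x - 1) q‖ = ‖q (x - 1)‖`, so each of the three terms has norm less than `1/4` and `d < 3/4`.
  Being at distance less than `1` from a unitary, `y` is invertible, and `z` is its polar part.
* Both `z ∈ 1 + B` and `z q = q = q z` come from the factorization
  `(a + 1) (a - 1) = y⋆ y - 1`, where `a + 1` is invertible because `a ≥ 0`: the right-hand side
  lies in the ideal `B` and is annihilated by `q`, hence the same holds for `a - 1`.
* The spectrum of `a` lies in `[1 - d, 1 + d]`: the upper bound is `‖a‖ ≤ ‖y‖`, and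
  for `0 ≤ t < 1 - d` the element `z (a - t) = y - t z` is within `d + t < 1` of the unitary `x`, so
  `a - t` is invertible. Therefore `‖z - y‖ = ‖1 - a‖ ≤ d` and `‖z - x‖ ≤ 2 d ≤ 2 d / (1 - d)`.
-/

theorem isUnit_of_norm_unitary_sub_lt_one {M : Type*} [CStarAlgebra M] {x y : M}
    (hx : x ∈ unitary M) (h : ‖x - y‖ < 1) : IsUnit y := by
  have h1 : ‖star x * (x - y)‖ < 1 := by
    rwa [CStarRing.norm_mem_unitary_mul _ (Unitary.star_mem hx)]
  have h2 : y = x * (1 - star x * (x - y)) := by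
    have := Unitary.mul_star_self_of_mem hx
    calc y = x - 1 * (x - y) := by noncomm_ring
      _ = x - (x * star x) * (x - y) := by rw [this]
      _ = _ := by noncomm_ring
  rw [h2]
  exact (Units.isUnit ⟨x, star x, Unitary.mul_star_self_of_mem hx,
    Unitary.star_mul_self_of_mem hx⟩).mul (isUnit_one_sub_of_norm_lt_one h1)

theorem norm_sub_compression_lt {M : Type*} [CStarAlgebra M] {p x : M}
    (hp_sa : IsSelfAdjoint p) (hp_idem : p * p = p) (hx_u : x ∈ unitary M)
    (hyp1 : ‖(p - 1) * (x - 1)‖ < 1 / 4)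
    (hyp2 : ‖(1 - p) * x * (1 - p) - (1 - p)‖ < 1 / 4) :
    ‖x - (p * x * p + (1 - p))‖ < 3 / 4 := by
  have hpn : ‖p‖ ≤ 1 := IsStarProjection.norm_le p ⟨hp_idem, hp_sa⟩
  have hps : star p = p := hp_sa
  have hnorm : ‖(x - 1) * (p - 1)‖ = ‖(p - 1) * (x - 1)‖ := by
    have hxx := Unitary.mul_star_self_of_mem hx_u
    have hxx' := Unitary.star_mul_self_of_mem hx_u
    have e : star (x - 1) * (x - 1) = (x - 1) * star (x - 1) := by
      simp only [star_sub, star_one, mul_sub, sub_mul, mul_one, one_mul, hxx, hxx']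
      abel
    have h1 : ‖(x - 1) * (p - 1)‖ * ‖(x - 1) * (p - 1)‖ =
        ‖(p - 1) * (x - 1)‖ * ‖(p - 1) * (x - 1)‖ := by
      rw [← CStarRing.norm_star_mul_self, ← CStarRing.norm_self_mul_star]
      congr 1
      rw [star_mul, star_mul, show star (p - 1) = p - 1 by simp [hps],
        mul_assoc, ← mul_assoc (star _), e]
      noncomm_ring
    exact (mul_self_inj (norm_nonneg _) (norm_nonneg _)).1 h1
  have e : x - (p * x * p + (1 - p)) =
      -((p - 1) * (x - 1) * p) - p * ((x - 1) * (p - 1)) +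
        ((1 - p) * x * (1 - p) - (1 - p)) := by
    have h (w : M) : p * (p * w) = p * w := by rw [← mul_assoc, hp_idem]
    simp only [mul_sub, sub_mul, mul_one, one_mul, mul_assoc, hp_idem]
    abel
  have b1 : ‖(p - 1) * (x - 1) * p‖ ≤ ‖(p - 1) * (x - 1)‖ :=
    (norm_mul_le _ _).trans (mul_le_of_le_one_right (norm_nonneg _) hpn)
  have b2 : ‖p * ((x - 1) * (p - 1))‖ ≤ ‖(p - 1) * (x - 1)‖ := by
    rw [← hnorm]
    exact (norm_mul_le _ _).trans (mul_le_of_le_one_left (norm_nonneg _) hpn)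
  have b3 := norm_add_le (-((p - 1) * (x - 1) * p) - p * ((x - 1) * (p - 1)))
    ((1 - p) * x * (1 - p) - (1 - p))
  have b4 := norm_sub_le (-((p - 1) * (x - 1) * p)) (p * ((x - 1) * (p - 1)))
  rw [norm_neg] at b4
  rw [e]
  linarith

/-- If `y = z a` is a polar decomposition with `z` unitary and `a ≥ 0`, then `a` is at least as close
to `1` as `y` is to any unitary `x`. A spectral value `t < 1 - ‖x - y‖` of `a` is impossible because
`y - t z = z (a - t)` is at distance less than `1` from `x`. -/
theorem norm_sub_one_le_of_polar {M : Type*} [CStarAlgebra M] [PartialOrder M] [StarOrderedRing M]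
    {x y z a : M} (hx : x ∈ unitary M) (hz : z ∈ unitary M) (ha : 0 ≤ a) (hza : z * a = y) : ‖a - 1‖ ≤ ‖x - y‖ := by
  have hsa : IsSelfAdjoint a := IsSelfAdjoint.of_nonneg ha
  have e : a - 1 = cfc (fun t : ℝ => t - 1) a := by
    rw [cfc_sub (fun t : ℝ => t) (fun _ => 1) a, cfc_id' ℝ a, cfc_const_one ℝ a]
  rw [e]
  refine norm_cfc_le (norm_nonneg _) fun t ht => ?_
  have ht0 : 0 ≤ t := spectrum_nonneg_of_nonneg ha ht
  rcases subsingleton_or_nontrivial M with hM | hM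
  · exact absurd (isUnit_of_subsingleton _) ht
  have hy : ‖y‖ ≤ 1 + ‖x - y‖ := by
    have := norm_sub_le x (x - y)
    rwa [sub_sub_cancel, CStarRing.norm_of_mem_unitary hx] at this
  have hta : t ≤ ‖a‖ := by
    have := spectrum.norm_le_norm_of_mem ht
    exact (le_abs_self t).trans this
  have hay : ‖a‖ = ‖y‖ := by rw [← hza, CStarRing.norm_mem_unitary_mul _ hz]
  rw [Real.norm_eq_abs, abs_le]
  refine ⟨?_, by linarith⟩
  by_contra hlt
  refine ht ?_
  have hd : ‖x - (y - t • z)‖ < 1 := by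
    have h1 := norm_add_le (x - y) (t • z)
    rw [norm_smul, CStarRing.norm_of_mem_unitary hz, Real.norm_of_nonneg ht0] at h1
    rw [show x - (y - t • z) = x - y + t • z by abel]
    linarith
  have hu := isUnit_of_norm_unitary_sub_lt_one hx hd
  have hu2 : IsUnit (star z) := Units.isUnit
    ⟨star z, z, Unitary.star_mul_self_of_mem hz, Unitary.mul_star_self_of_mem hz⟩
  have e2 : algebraMap ℝ M t - a = -(star z * (y - t • z)) := by
    rw [← hza, mul_sub, ← mul_assoc, mul_smul_comm, Unitary.star_mul_self_of_mem hz, one_mul,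
      Algebra.algebraMap_eq_smul_one, neg_sub]
  rw [spectrum.mem_resolventSet_iff, e2]
  exact (hu2.mul hu).neg

/-- Let `B` be a C*-algebra (realized as a closed two-sided star-ideal of a
unital C*-algebra `M` playing the role of `M(B)`), `p ∈ M(B)` a projection, and `x ∈ U(1+B)`
a unitary with scalar part `1` such that `‖(p − 1)(x − 1)‖ < 1/4` and
`‖(1−p)x(1−p) − (1−p)‖ < 1/4`.  Define `x' = pxp + (1 − p)`.  Then `‖x − x'‖ < 1`, `x'` is
invertible, and `z = x'|x'|⁻¹` is a unitary of the form `1 + pbp` with `b ∈ B` (i.e.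
`z ∈ U(1 + pBp) ⊕ (1−p)`), with `‖z − x‖ ≤ 2‖x − x'‖ / (1 − ‖x − x'‖)`. -/
theorem cutting_down_a_unitary
    {M : Type*} [CStarAlgebra M] [PartialOrder M] [StarOrderedRing M]
    (B : NonUnitalStarSubalgebra ℂ M)
    (hB_closed : IsClosed (B : Set M))
    (hB_ideal : ∀ x : M, ∀ b ∈ B, x * b ∈ B ∧ b * x ∈ B)
    (p : M) (hp_sa : IsSelfAdjoint p) (hp_idem : p * p = p)
    (x : M) (hx_u : x ∈ unitary M) (hxB : x - 1 ∈ B)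
    (hyp1 : ‖(p - 1) * (x - 1)‖ < 1 / 4)
    (hyp2 : ‖(1 - p) * x * (1 - p) - (1 - p)‖ < 1 / 4) :
    ‖x - (p * x * p + (1 - p))‖ < 1 ∧
    IsUnit (p * x * p + (1 - p)) ∧
    ((p * x * p + (1 - p)) *
        Ring.inverse (CFC.sqrt (star (p * x * p + (1 - p)) * (p * x * p + (1 - p))))
      ∈ unitary M) ∧
    (∃ b ∈ B,
      (p * x * p + (1 - p)) *
          Ring.inverse (CFC.sqrt (star (p * x * p + (1 - p)) * (p * x * p + (1 - p)))) =
        1 + p * b * p) ∧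
    ‖(p * x * p + (1 - p)) *
        Ring.inverse (CFC.sqrt (star (p * x * p + (1 - p)) * (p * x * p + (1 - p)))) - x‖ ≤
      2 * ‖x - (p * x * p + (1 - p))‖ / (1 - ‖x - (p * x * p + (1 - p))‖) := by
  have hd34 := norm_sub_compression_lt hp_sa hp_idem hx_u hyp1 hyp2
  have hps : star p = p := hp_sa
  have hyB : p * x * p + (1 - p) - 1 ∈ B := by
    have : p * x * p + (1 - p) - 1 = p * (x - 1) * p := by
      simp only [mul_sub, sub_mul, mul_one, hp_idem]; abel
    rw [this]
    exact (hB_ideal p _ (hB_ideal p _ hxB).1).2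
  have hyq : (p * x * p + (1 - p)) * (1 - p) = 1 - p := by
    simp only [mul_sub, sub_mul, add_mul, mul_one, one_mul, mul_assoc, hp_idem]; abel
  have hqy : (1 - p) * (p * x * p + (1 - p)) = 1 - p := by
    have h (w : M) : p * (p * w) = p * w := by rw [← mul_assoc, hp_idem]
    simp only [mul_sub, sub_mul, mul_add, mul_one, one_mul, mul_assoc, hp_idem, h]; abel
  generalize p * x * p + (1 - p) = y at *
  have hd : ‖x - y‖ < 1 := by linarith
  have hyu : IsUnit y := isUnit_of_norm_unitary_sub_lt_one hx_u hd
  have hc0 : 0 ≤ star y * y := star_mul_self_nonneg y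
  have ha0 : 0 ≤ CFC.sqrt (star y * y) := CFC.sqrt_nonneg _
  have haa : CFC.sqrt (star y * y) * CFC.sqrt (star y * y) = star y * y :=
    CFC.sqrt_mul_sqrt_self _ hc0
  have hau : IsUnit (CFC.sqrt (star y * y)) :=
    (CFC.isUnit_sqrt_iff _ hc0).2 (hyu.star.mul hyu)
  generalize CFC.sqrt (star y * y) = a at *
  have hsa : star a = a := IsSelfAdjoint.of_nonneg ha0
  have hia : Ring.inverse a * a = 1 := Ring.inverse_mul_cancel a hau
  have hai : a * Ring.inverse a = 1 := Ring.mul_inverse_cancel a hau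
  have hsi : star (Ring.inverse a) = Ring.inverse a := by rw [← Ring.inverse_star, hsa]
  have hiu : IsUnit (Ring.inverse a) := hau.ringInverse
  generalize Ring.inverse a = i at *
  have hz : y * i ∈ unitary M := by
    have h1 : star (y * i) * (y * i) = 1 := by
      rw [star_mul, hsi]
      calc i * star y * (y * i) = i * (star y * y) * i := by noncomm_ring
        _ = (i * a) * (a * i) := by rw [← haa]; noncomm_ring
        _ = 1 := by rw [hia, hai, one_mul]
    refine Unitary.mem_iff.2 ⟨h1, ?_⟩
    obtain ⟨k, hk⟩ := (hyu.mul hiu).exists_right_inv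
    have h2 : star (y * i) = k := left_inv_eq_right_inv h1 hk
    rw [h2, hk]
  -- The factorization of `a² - 1` lets `a - 1` inherit the properties of `y⋆ y - 1`.
  have ha1 : IsUnit (a + 1) := by
    have h : IsUnit (algebraMap ℝ M (-1) - a) := by
      by_contra h
      have : (0 : ℝ) ≤ -1 := spectrum_nonneg_of_nonneg ha0 h
      linarith
    have e : a + 1 = -(algebraMap ℝ M (-1) - a) := by simp
    rw [e]; exact h.neg
  obtain ⟨j, hj⟩ := ha1.exists_left_inv
  have hfac : a - 1 = j * (star y * y - 1) := by
    rw [← haa, show a * a - 1 = (a + 1) * (a - 1) by noncomm_ring, ← mul_assoc, hj, one_mul]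
  have hysq : star y * (1 - p) = 1 - p := by
    have := congrArg star hqy
    simpa [hps] using this
  have haq : a * (1 - p) = 1 - p := by
    have : (a - 1) * (1 - p) = 0 := by
      rw [hfac, mul_assoc, sub_mul, mul_assoc, hyq, hysq, one_mul, sub_self, mul_zero]
    rwa [sub_mul, one_mul, sub_eq_zero] at this
  have hiq : i * (1 - p) = 1 - p := by
    conv_lhs => rw [← haq]
    rw [← mul_assoc, hia, one_mul]
  have hqi : (1 - p) * i = 1 - p := by
    have := congrArg star hiq
    simpa [hps, hsi] using this
  have hzq : (y * i - 1) * (1 - p) = 0 := by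
    rw [sub_mul, mul_assoc, hiq, hyq, one_mul, sub_self]
  have hqz : (1 - p) * (y * i - 1) = 0 := by
    rw [mul_sub, ← mul_assoc, hqy, hqi, mul_one, sub_self]
  have haB : a - 1 ∈ B := by
    have h1 : star y * y - 1 = star y * (y - 1) + star (y - 1) := by
      rw [star_sub, star_one]; noncomm_ring
    rw [hfac, h1]
    exact (hB_ideal j _ (add_mem (hB_ideal _ _ hyB).1 (star_mem hyB))).1
  have hzB : y * i - 1 ∈ B := by
    have h1 : y * i - 1 = (y - 1) * i - i * (a - 1) := by
      rw [mul_sub, hia]; noncomm_ring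
    rw [h1]
    exact sub_mem (hB_ideal _ _ hyB).2 (hB_ideal _ _ haB).1
  refine ⟨hd, hyu, hz, ⟨y * i - 1, hzB, ?_⟩, ?_⟩
  · generalize y * i = z at *
    have h1 : p * (z - 1) = z - 1 := by
      rw [sub_mul, one_mul, sub_eq_zero] at hqz; exact hqz.symm
    have h2 : (z - 1) * p = z - 1 := by
      rw [mul_sub, mul_one, sub_eq_zero] at hzq; exact hzq.symm
    rw [h1, h2]; abel
  · have hza : y * i * a = y := by rw [mul_assoc, hia, mul_one]
    have h1 := norm_sub_one_le_of_polar hx_u hz ha0 hza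
    have h2 : ‖y * i - y‖ ≤ ‖x - y‖ := by
      have : y * i - y = -(y * i * (a - 1)) := by
        rw [mul_sub, hza, mul_one, neg_sub]
      rw [this, norm_neg, CStarRing.norm_mem_unitary_mul _ hz]
      exact h1
    have h3 := norm_sub_le_norm_sub_add_norm_sub (y * i) y x
    rw [norm_sub_rev y x] at h3
    have h0 := norm_nonneg (x - y)
    rw [le_div_iff₀ (by linarith)]
    have h4 : ‖y * i - x‖ ≤ 2 * ‖x - y‖ := by linarith
    nlinarith [norm_nonneg (y * i - x)]
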